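/- Every k-list-critical graph G with G ≠ K_k and k ≥ 4 has average degree at least k−1 + (k−3)/(k²−2k+2); equivalently, 2·e(G) ≥ (k−1 + (k−3)/(k²−2k+2))·|V(G)| + 2/(k²−2k+2). -/

import Mathlib

open SimpleGraph

namespace Paper

variable {V : Type*} {W : Type*}

/-- `s` is an independent set in `G`. -/
def IsIndepSet (G : SimpleGraph V) (s : Set V) : Prop :=
  ∀ ⦃u⦄, u ∈ s → ∀ ⦃v⦄, v ∈ s → ¬ G.Adj u v

/-- The independence number of `G`. -/
noncomputable def indepNum (G : SimpleGraph V) : ℕ :=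
  sSup {n | ∃ s : Finset V, IsIndepSet G ↑s ∧ s.card = n}

/-- The number of edges of `G`. -/
noncomputable def edgeCount (G : SimpleGraph V) : ℕ := Nat.card G.edgeSet

/-- The degree of a vertex. -/
noncomputable def deg (G : SimpleGraph V) (v : V) : ℕ := Nat.card (G.neighborSet v)

/-- The number of edges with exactly one endpoint in `I`. -/
noncomputable def crossCount (G : SimpleGraph V) (I : Set V) : ℕ :=
  Nat.card {p : V × V // p.1 ∈ I ∧ p.2 ∉ I ∧ G.Adj p.1 p.2}

/-- The maximum independent cover number of `G`. -/
noncomputable def mic (G : SimpleGraph V) : ℕ :=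
  sSup {n | ∃ I : Set V, IsIndepSet G I ∧ crossCount G I = n}

/-- A graph is an odd cycle iff it is connected, 2-regular, with an odd number of vertices. -/
def IsOddCycle (H : SimpleGraph W) : Prop :=
  H.Connected ∧ (∀ v, deg H v = 2) ∧ Odd (Nat.card W)

/-- `B` is a block of `G`: a maximal set inducing a connected subgraph with no cutvertex. -/
def IsBlock (G : SimpleGraph V) (B : Set V) : Prop :=
  ((G.induce B).Connected ∧ ∀ v ∈ B, (G.induce (B \ {v})).Connected) ∧
    ∀ B' : Set V, B ⊆ B' →
      ((G.induce B').Connected ∧ ∀ v ∈ B', (G.induce (B' \ {v})).Connected) → B' = B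

/-- A Gallai tree: a connected graph each of whose blocks is complete or an odd cycle. -/
def IsGallaiTree (G : SimpleGraph V) : Prop :=
  G.Connected ∧ ∀ B : Set V, IsBlock G B → (G.induce B = ⊤ ∨ IsOddCycle (G.induce B))

/-- `G` is `r`-choosable: every assignment of lists of size `r` admits a proper coloring. -/
def Choosable (G : SimpleGraph V) (r : ℕ) : Prop :=
  ∀ L : V → Finset ℕ, (∀ v, (L v).card = r) →
    ∃ c : V → ℕ, (∀ v, c v ∈ L v) ∧ ∀ ⦃u v⦄, G.Adj u v → c u ≠ c v

/-- `G` is `k`-list-critical: not `(k-1)`-choosable but every proper subgraph is. -/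
def ListCritical (k : ℕ) (G : SimpleGraph V) : Prop :=
  ¬ Choosable G (k - 1) ∧ ∀ H : G.Subgraph, H ≠ ⊤ → Choosable H.coe (k - 1)

end Paper

open Paper

namespace LCP

open Finset

open scoped Classical

section basics

variable {V : Type*}

/-- Number of neighbors of `v` in `X`. -/
noncomputable def dg (G : SimpleGraph V) (X : Finset V) (v : V) : ℕ :=
  (X.filter (fun u => G.Adj v u)).card

/-- Colorability of `X` from lists. -/
def LC (G : SimpleGraph V) (X : Finset V) (L : V → Finset ℕ) : Prop :=
  ∃ c : V → ℕ, (∀ v ∈ X, c v ∈ L v) ∧ ∀ u ∈ X, ∀ v ∈ X, G.Adj u v → c u ≠ c v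

/-- Connectedness of a finite set of vertices. -/
def Conn (G : SimpleGraph V) (S : Finset V) : Prop :=
  ∀ P ⊆ S, P.Nonempty → (S \ P).Nonempty → ∃ a ∈ P, ∃ b ∈ S \ P, G.Adj a b

/-- No cutvertex. -/
def NC (G : SimpleGraph V) (S : Finset V) : Prop := ∀ v ∈ S, Conn G (S \ {v})

def Ind (G : SimpleGraph V) (S : Finset V) : Prop := ∀ u ∈ S, ∀ v ∈ S, ¬ G.Adj u v

variable (G : SimpleGraph V)

lemma dg_mono {X Y : Finset V} (h : X ⊆ Y) (v : V) : dg G X v ≤ dg G Y v :=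
  card_le_card (filter_subset_filter _ h)

lemma dg_union {X Y : Finset V} (h : Disjoint X Y) (v : V) :
    dg G (X ∪ Y) v = dg G X v + dg G Y v := by
  unfold dg
  rw [filter_union, card_union_of_disjoint (disjoint_filter_filter h)]

lemma dg_split {X Y : Finset V} (h : X ⊆ Y) (v : V) :
    dg G Y v = dg G X v + dg G (Y \ X) v := by
  rw [← dg_union G disjoint_sdiff, union_sdiff_of_subset h]

lemma dg_zero {X : Finset V} {v : V} (h : ∀ u ∈ X, ¬ G.Adj v u) : dg G X v = 0 := by
  unfold dg
  rw [card_eq_zero, filter_eq_empty_iff]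
  exact fun u hu => h u hu

lemma dg_pos {X : Finset V} {v u : V} (hu : u ∈ X) (h : G.Adj v u) : 1 ≤ dg G X v :=
  card_pos.2 ⟨u, by simp [hu, h]⟩

lemma not_adj_of_dg_zero {X : Finset V} {v u : V} (h : dg G X v = 0) (hu : u ∈ X) :
    ¬ G.Adj v u := fun hh => by
  have := dg_pos G hu hh
  omega

lemma dg_singleton (u v : V) : dg G {u} v = if G.Adj v u then 1 else 0 := by
  unfold dg
  rw [filter_singleton]
  split_ifs <;> simp

lemma dg_comm (X Y : Finset V) : ∑ v ∈ X, dg G Y v = ∑ v ∈ Y, dg G X v := by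
  have := sum_card_bipartiteAbove_eq_sum_card_bipartiteBelow (s := X) (t := Y) G.Adj
  unfold dg
  simp only [bipartiteAbove, bipartiteBelow] at this
  rw [this]
  refine sum_congr rfl fun v _ => ?_
  simp only [G.adj_comm]

lemma dg_lt_card {X : Finset V} {v : V} (hv : v ∈ X) : dg G X v + 1 ≤ X.card := by
  have : dg G X v ≤ (X.erase v).card := by
    apply card_le_card
    intro u hu
    simp only [mem_filter] at hu
    exact mem_erase.2 ⟨fun h => G.loopless.irrefl v (h ▸ hu.2), hu.1⟩
  rw [card_erase_of_mem hv] at this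
  have := card_pos.2 ⟨v, hv⟩
  omega

/-- Twice the number of edges in `X`. -/
noncomputable def sg (X : Finset V) : ℕ := ∑ v ∈ X, dg G X v

lemma sg_union {X Y : Finset V} (h : Disjoint X Y) :
    sg G (X ∪ Y) = sg G X + sg G Y + 2 * ∑ v ∈ X, dg G Y v := by
  unfold sg
  rw [sum_union h, sum_congr rfl (fun v _ => dg_union G h v),
    sum_congr (s₁ := Y) rfl (fun v _ => dg_union G h v), sum_add_distrib, sum_add_distrib,
    dg_comm G Y X]
  ring

lemma sg_split {X Y : Finset V} (h : X ⊆ Y) :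
    sg G Y = sg G X + sg G (Y \ X) + 2 * ∑ v ∈ X, dg G (Y \ X) v := by
  rw [← sg_union G disjoint_sdiff, union_sdiff_of_subset h]

/-- Greedy coloring. -/
lemma greedy (L : V → Finset ℕ) (X : Finset V)
    (h : ∀ P ⊆ X, P.Nonempty → ∃ a ∈ P, dg G P a < (L a).card) : LC G X L := by
  induction X using Finset.strongInduction with
  | H X ih =>
    rcases X.eq_empty_or_nonempty with rfl | hne
    · exact ⟨fun _ => 0, by simp, by simp⟩
    obtain ⟨a, ha, hlt⟩ := h X subset_rfl hne
    obtain ⟨c, hc1, hc2⟩ := ih (X.erase a) (erase_ssubset ha)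
      (fun P hP hPn => h P (hP.trans (erase_subset _ _)) hPn)
    obtain ⟨x, hx, hx'⟩ : ∃ x ∈ L a, x ∉ (X.filter (fun u => G.Adj a u)).image c := by
      by_contra hcon
      push Not at hcon
      have h1 := card_le_card (show L a ⊆ _ from hcon)
      have h2 : ((X.filter (fun u => G.Adj a u)).image c).card ≤ dg G X a := card_image_le
      omega
    simp only [mem_image, mem_filter, not_exists, not_and] at hx'
    refine ⟨Function.update c a x, ?_, ?_⟩
    · intro v hv
      by_cases hva : v = a
      · subst hva; simpa using hx
      · rw [Function.update_of_ne hva]; exact hc1 v (mem_erase.2 ⟨hva, hv⟩)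
    · intro u hu v hv huv
      by_cases hua : u = a
      · subst hua
        have hvu : v ≠ u := huv.ne'
        rw [Function.update_self, Function.update_of_ne hvu]
        exact fun he => hx' v ⟨hv, huv⟩ he.symm
      · by_cases hva : v = a
        · subst hva
          rw [Function.update_self, Function.update_of_ne hua]
          exact fun he => hx' u ⟨hu, huv.symm⟩ he
        · rw [Function.update_of_ne hua, Function.update_of_ne hva]
          exact hc2 u (mem_erase.2 ⟨hua, hu⟩) v (mem_erase.2 ⟨hva, hv⟩) huv

lemma conn_color (L : V → Finset ℕ) {X : Finset V} (hX : Conn G X)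
    (hL : ∀ v ∈ X, dg G X v ≤ (L v).card) {v0 : V} (hv0 : v0 ∈ X)
    (h0 : dg G X v0 < (L v0).card) : LC G X L := by
  apply greedy
  intro P hP hPn
  by_cases hPX : (X \ P).Nonempty
  · obtain ⟨a, ha, b, hb, hab⟩ := hX P hP hPn hPX
    refine ⟨a, ha, ?_⟩
    have h1 := dg_split G hP a
    have h2 := dg_pos G hb hab
    have h3 := hL a (hP ha)
    omega
  · rw [not_nonempty_iff_eq_empty, sdiff_eq_empty_iff_subset] at hPX
    have : P = X := subset_antisymm hP hPX
    subst this
    exact ⟨v0, hv0, h0⟩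

/-- A connected set without cutvertex that is not colorable from degree-sized lists is regular. -/
lemma regular (L : V → Finset ℕ) {X : Finset V} (hX : Conn G X) (hN : NC G X)
    (hL : ∀ v ∈ X, dg G X v ≤ (L v).card) (hbad : ¬ LC G X L) :
    ∀ u ∈ X, ∀ v ∈ X, dg G X u = dg G X v := by
  have heq : ∀ v ∈ X, (L v).card = dg G X v := by
    intro v hv
    by_contra hne
    exact hbad (conn_color G L hX hL hv (lt_of_le_of_ne (hL v hv) (Ne.symm hne)))
  have hsub : ∀ u ∈ X, ∀ v ∈ X, G.Adj u v → L v ⊆ L u := by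
    intro u hu v hv huv x hx
    by_contra hxu
    apply hbad
    have hcol : LC G (X \ {v}) (fun z => if G.Adj z v then (L z).erase x else L z) := by
      have key : ∀ z ∈ X \ {v}, dg G X z = (if G.Adj z v then 1 else 0) + dg G (X \ {v}) z := by
        intro z _
        rw [dg_split G (singleton_subset_iff.2 hv) z, dg_singleton]
      refine conn_color G _ (hN v hv) ?_ (v0 := u) ?_ ?_
      · intro z hz
        have h1 := key z hz
        have h2 := heq z (mem_sdiff.1 hz).1
        split_ifs at h1 ⊢ with hzv
        · have := pred_card_le_card_erase (s := L z) (a := x)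
          omega
        · omega
      · simp [hu, huv.ne]
      · have h1 := key u (by simp [hu, huv.ne])
        have h2 := heq u hu
        rw [if_pos huv] at h1
        simp only [if_pos huv]
        rw [erase_eq_of_notMem hxu]
        omega
    obtain ⟨c, hc1, hc2⟩ := hcol
    have hc3 : ∀ z ∈ X, z ≠ v → c z ∈ L z ∧ (G.Adj z v → c z ≠ x) := by
      intro z hz hzv
      have := hc1 z (by simp [hz, hzv])
      dsimp only at this
      split_ifs at this with h
      · exact ⟨mem_of_mem_erase this, fun _ => ne_of_mem_erase this⟩
      · exact ⟨this, fun h' => absurd h' h⟩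
    refine ⟨Function.update c v x, ?_, ?_⟩
    · intro z hz
      by_cases hzv : z = v
      · subst hzv; simpa using hx
      · rw [Function.update_of_ne hzv]; exact (hc3 z hz hzv).1
    · intro y hy z hz hyz
      by_cases hyv : y = v
      · subst hyv
        rw [Function.update_self, Function.update_of_ne hyz.ne']
        exact ((hc3 z hz hyz.ne').2 hyz.symm).symm
      · by_cases hzv : z = v
        · subst hzv
          rw [Function.update_self, Function.update_of_ne hyv]
          exact (hc3 y hy hyv).2 hyz
        · rw [Function.update_of_ne hyv, Function.update_of_ne hzv]
          exact hc2 y (by simp [hy, hyv]) z (by simp [hz, hzv]) hyz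
  have hadj : ∀ u ∈ X, ∀ v ∈ X, G.Adj u v → dg G X u = dg G X v := by
    intro u hu v hv huv
    rw [← heq u hu, ← heq v hv,
      subset_antisymm (hsub u hu v hv huv) (hsub v hv u hu huv.symm)]
  intro u hu v hv
  by_contra hne
  obtain ⟨a, ha, b, hb, hab⟩ := hX (X.filter (fun z => dg G X z = dg G X u)) (filter_subset _ _)
    ⟨u, by simp [hu]⟩ ⟨v, by simp [hv, Ne.symm hne]⟩
  simp only [mem_filter, mem_sdiff, not_and] at ha hb
  exact hb.2 hb.1 ((hadj a ha.1 b hb.1 hab).symm.trans ha.2)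

/-- End blocks. -/
lemma endblock {X : Finset V} (hX : Conn G X) {x0 : V} {D : Finset V} (hD : D.Nonempty)
    (hDX : D ⊆ X) (hx0 : x0 ∈ X \ D)
    (hcl : ∀ a ∈ D, ∀ b ∈ X, G.Adj a b → b ∈ D ∨ b = x0) :
    ∃ x C, C.Nonempty ∧ C ⊆ D ∧ x ∈ X \ C ∧ (∀ a ∈ C, ∀ b ∈ X, G.Adj a b → b ∈ C ∨ b = x) ∧
      Conn G (insert x C) ∧ NC G (insert x C) := by
  let Q : ℕ → Prop := fun n => ∃ x C, C.card = n ∧ C.Nonempty ∧ C ⊆ D ∧ x ∈ X \ C ∧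
    (∀ a ∈ C, ∀ b ∈ X, G.Adj a b → b ∈ C ∨ b = x)
  have hQ : ∃ n, Q n := ⟨D.card, x0, D, rfl, hD, subset_rfl, hx0, hcl⟩
  obtain ⟨x, C, hCc, hCn, hCD, hx, hC⟩ := Nat.find_spec hQ
  have hmin : ∀ y P, P.Nonempty → P ⊆ C → P ≠ C → y ∈ X \ P →
      (∀ a ∈ P, ∀ b ∈ X, G.Adj a b → b ∈ P ∨ b = y) → False := by
    intro y P h1 h2 h3 h4 h5
    have hlt : P.card < C.card := card_lt_card (h2.ssubset_of_ne h3)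
    rw [hCc] at hlt
    exact Nat.find_min hQ hlt ⟨y, P, rfl, h1, h2.trans hCD, h4, h5⟩
  have hxX : x ∈ X := (mem_sdiff.1 hx).1
  have hxC : x ∉ C := (mem_sdiff.1 hx).2
  have hCX : C ⊆ X := hCD.trans hDX
  -- symmetric form of splitting
  have main1 : ∀ P ⊆ insert x C, P.Nonempty → x ∉ P →
      ∃ a ∈ P, ∃ b ∈ insert x C \ P, G.Adj a b := by
    intro P hP hPn hxP
    have hPC : P ⊆ C := fun z hz => by
      rcases mem_insert.1 (hP hz) with h | h
      · exact absurd (h ▸ hz) hxP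
      · exact h
    by_contra hcon
    push Not at hcon
    by_cases hPe : P = C
    · subst hPe
      obtain ⟨a, ha, b, hb, hab⟩ := hX P hCX hPn ⟨x, hx⟩
      rcases hC a ha b (mem_sdiff.1 hb).1 hab with h | h
      · exact (mem_sdiff.1 hb).2 h
      · subst h
        exact hcon a ha b (by simp [hxC]) hab
    · refine hmin x P hPn hPC hPe (by simp [hxX, hxP]) ?_
      intro a ha b hb hab
      by_contra hno
      push Not at hno
      refine hcon a ha b ?_ hab
      rcases hC a (hPC ha) b hb hab with h | h
      · simp [h, hno.1]
      · exact absurd h hno.2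
  have main2 : ∀ v ∈ insert x C, ∀ P ⊆ insert x C \ {v}, P.Nonempty → x ∉ P →
      ((insert x C \ {v}) \ P).Nonempty → ∃ a ∈ P, ∃ b ∈ (insert x C \ {v}) \ P, G.Adj a b := by
    intro v hv P hP hPn hxP hPc
    have hPC : P ⊆ C := fun z hz => by
      rcases mem_insert.1 (mem_sdiff.1 (hP hz)).1 with h | h
      · exact absurd (h ▸ hz) hxP
      · exact h
    have hvP : v ∉ P := fun h => by simpa using hP h
    by_contra hcon
    push Not at hcon
    refine hmin v P hPn hPC ?_ ?_ ?_
    · rintro rfl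
      obtain ⟨z, hz⟩ := hPc
      simp only [mem_sdiff, mem_insert, mem_singleton] at hz hv
      rcases hv with rfl | hv
      · tauto
      · exact hvP hv
    · rcases mem_insert.1 hv with rfl | h
      · simp [hxX, hxP]
      · simp [hCX h, hvP]
    · intro a ha b hb hab
      by_contra hno
      push Not at hno
      refine hcon a ha b ?_ hab
      rcases hC a (hPC ha) b hb hab with h | h
      · simp [h, hno.1, hno.2]
      · subst h
        simp [hno.1, hno.2]
  refine ⟨x, C, hCn, hCD, hx, hC, ?_, ?_⟩
  · intro P hP hPn hPc
    by_cases hxP : x ∈ P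
    · obtain ⟨a, ha, b, hb, hab⟩ := main1 (insert x C \ P) sdiff_subset hPc (by simp [hxP])
      rw [Finset.sdiff_sdiff_eq_self hP] at hb
      exact ⟨b, hb, a, ha, hab.symm⟩
    · exact main1 P hP hPn hxP
  · intro v hv P hP hPn hPc
    by_cases hxP : x ∈ P
    · obtain ⟨a, ha, b, hb, hab⟩ := main2 v hv ((insert x C \ {v}) \ P) sdiff_subset hPc
        (by simp [hxP]) (by rw [Finset.sdiff_sdiff_eq_self hP]; exact hPn)
      rw [Finset.sdiff_sdiff_eq_self hP] at hb
      exact ⟨b, hb, a, ha, hab.symm⟩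
    · exact main2 v hv P hP hPn hxP hPc

end basics

section kernels

variable {V : Type*} (G : SimpleGraph V)

/-- Kernels exist. -/
lemma kernel (O : V → V → Prop) (A : Finset V) (hA : Ind G A)
    (h1 : ∀ u v, G.Adj u v → O u v ∨ O v u)
    (h2 : ∀ u v, G.Adj u v → u ∉ A → v ∉ A → O u v) (Y : Finset V) :
    ∃ K ⊆ Y, Ind G K ∧ ∀ v ∈ Y \ K, ∃ u ∈ K, O v u := by
  induction Y using Finset.strongInduction with
  | H Y ih =>
    by_cases hex : ∃ v ∈ Y \ A, ∀ u ∈ Y ∩ A, ¬ O v u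
    · obtain ⟨v, hv, hno⟩ := hex
      rw [mem_sdiff] at hv
      obtain ⟨K, hKY, hKI, hKa⟩ := ih (Y.filter (fun u => u ≠ v ∧ ¬ O u v))
        (filter_ssubset.2 ⟨v, hv.1, by simp⟩)
      have hnadj : ∀ u ∈ K, ¬ G.Adj u v := by
        intro u hu huv
        have hu' := mem_filter.1 (hKY hu)
        by_cases huA : u ∈ A
        · rcases h1 u v huv with h | h
          · exact hu'.2.2 h
          · exact hno u (by simp [hu'.1, huA]) h
        · exact hu'.2.2 (h2 u v huv huA hv.2)
      refine ⟨insert v K, ?_, ?_, ?_⟩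
      · intro z hz
        rcases mem_insert.1 hz with rfl | h
        · exact hv.1
        · exact (mem_filter.1 (hKY h)).1
      · intro a ha b hb hab
        rcases mem_insert.1 ha with rfl | ha
        · rcases mem_insert.1 hb with rfl | hb
          · exact hab.ne rfl
          · exact hnadj b hb hab.symm
        · rcases mem_insert.1 hb with hb | hb
          · exact hnadj a ha (hb ▸ hab)
          · exact hKI a ha b hb hab
      · intro z hz
        simp only [mem_sdiff, mem_insert, not_or] at hz
        by_cases hzv : O z v
        · exact ⟨v, by simp, hzv⟩
        · obtain ⟨u, hu, hzu⟩ := hKa z (by simp [hz, hzv])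
          exact ⟨u, by simp [hu], hzu⟩
    · push Not at hex
      refine ⟨Y ∩ A, inter_subset_left, fun a ha b hb => hA a (mem_inter.1 ha).2 b (mem_inter.1 hb).2, ?_⟩
      intro v hv
      exact hex v (by simp at hv ⊢; tauto)

lemma kernel_color (O : V → V → Prop) (A : Finset V) (hA : Ind G A)
    (h1 : ∀ u v, G.Adj u v → O u v ∨ O v u)
    (h2 : ∀ u v, G.Adj u v → u ∉ A → v ∉ A → O u v) (X : Finset V) (L : V → Finset ℕ)
    (hL : ∀ v ∈ X, (X.filter (fun u => O v u)).card < (L v).card) : LC G X L := by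
  induction X using Finset.strongInduction generalizing L with
  | H X ih =>
    rcases X.eq_empty_or_nonempty with rfl | ⟨v0, hv0⟩
    · exact ⟨fun _ => 0, by simp, by simp⟩
    obtain ⟨a, ha⟩ : (L v0).Nonempty := card_pos.1 (by have := hL v0 hv0; omega)
    obtain ⟨K, hKY, hKI, hKa⟩ := kernel G O A hA h1 h2 (X.filter (fun v => a ∈ L v))
    have hKX : K ⊆ X := hKY.trans (filter_subset _ _)
    have hKn : K.Nonempty := by
      by_contra hK
      rw [not_nonempty_iff_eq_empty] at hK
      subst hK
      obtain ⟨u, hu, _⟩ := hKa v0 (by simp [hv0, ha])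
      simp at hu
    obtain ⟨c, hc1, hc2⟩ := ih (X \ K) (sdiff_ssubset hKX hKn) (fun v => (L v).erase a) (by
      intro v hv
      have hv' := mem_sdiff.1 hv
      have h0 := hL v hv'.1
      have hsub : (X \ K).filter (fun u => O v u) ⊆ X.filter (fun u => O v u) :=
        filter_subset_filter _ sdiff_subset
      by_cases hav : a ∈ L v
      · obtain ⟨u, hu, hvu⟩ := hKa v (by simp [hv', hav])
        have : ((X \ K).filter (fun u => O v u)).card < (X.filter (fun u => O v u)).card := by
          apply card_lt_card
          refine hsub.ssubset_of_ne fun he => ?_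
          have : u ∈ (X \ K).filter (fun u => O v u) := he ▸ by simp [hKX hu, hvu]
          simp [hu] at this
        have h3 := card_erase_of_mem hav
        omega
      · have := card_le_card hsub
        rw [erase_eq_of_notMem hav]
        omega)
    have hc3 : ∀ v ∈ X, v ∉ K → c v ∈ L v ∧ c v ≠ a := by
      intro v hv hvK
      have := hc1 v (by simp [hv, hvK])
      exact ⟨mem_of_mem_erase this, ne_of_mem_erase this⟩
    refine ⟨fun v => if v ∈ K then a else c v, ?_, ?_⟩
    · intro v hv
      dsimp only
      split_ifs with h
      · exact (mem_filter.1 (hKY h)).2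
      · exact (hc3 v hv h).1
    · intro u hu v hv huv
      dsimp only
      split_ifs with h h' h'
      · exact absurd huv (hKI u h v h')
      · exact (hc3 v hv h').2.symm
      · exact (hc3 u hu h).2
      · exact hc2 u (by simp [hu, h]) v (by simp [hv, h']) huv

/-- Edges between `A` and its complement inside `X`. -/
noncomputable def ed (A X : Finset V) : Finset (V × V) :=
  (X ×ˢ X).filter (fun p => p.1 ∈ A ∧ p.2 ∉ A ∧ G.Adj p.1 p.2)

/-- Minimal sets have good orientations. -/
lemma orient (A X : Finset V) (hA : Ind G A) (r : V → ℕ)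
    (hX : ∑ v ∈ X, r v ≤ (ed G A X).card)
    (hmin : ∀ Y ⊂ X, Y.Nonempty → (ed G A Y).card < ∑ v ∈ Y, r v) :
    ∃ O : V → V → Prop, (∀ u v, G.Adj u v → O u v ∨ O v u) ∧
      (∀ u v, G.Adj u v → u ∉ A → v ∉ A → O u v) ∧
      ∀ v ∈ X, (X.filter (fun u => O v u)).card + r v ≤ dg G X v := by
  let t : (Σ v : {v // v ∈ X}, Fin (r v.1)) → Finset (V × V) := fun i =>
    (ed G A X).filter (fun p => p.1 = i.1.1 ∨ p.2 = i.1.1)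
  have hall : ∀ s : Finset (Σ v : {v // v ∈ X}, Fin (r v.1)), s.card ≤ (s.biUnion t).card := by
    intro s
    rcases s.eq_empty_or_nonempty with rfl | hsn
    · simp
    let Z : Finset V := s.image (fun i => i.1.1)
    have hZX : Z ⊆ X := by
      intro z hz
      obtain ⟨i, _, rfl⟩ := mem_image.1 hz
      exact i.1.2
    have hZn : Z.Nonempty := hsn.image _
    have hs : s.card ≤ ∑ v ∈ Z, r v := by
      have hmap : Set.MapsTo (fun i : (Σ v : {v // v ∈ X}, Fin (r v.1)) => i.1.1) s Z :=
        fun i hi => mem_image_of_mem _ hi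
      rw [card_eq_sum_card_fiberwise hmap]
      refine sum_le_sum fun v hv => ?_
      have hvX := hZX hv
      calc (s.filter (fun i => i.1.1 = v)).card
          ≤ ((univ : Finset (Fin (r v))).image
              (fun j => (⟨⟨v, hvX⟩, j⟩ : Σ v : {v // v ∈ X}, Fin (r v.1)))).card := by
            apply card_le_card
            rintro ⟨⟨w, hw⟩, j⟩ hi
            have hwv : w = v := (mem_filter.1 hi).2
            subst hwv
            exact mem_image.2 ⟨j, mem_univ _, rfl⟩
        _ ≤ r v := by
            refine card_image_le.trans ?_
            simp
    have hbi : ed G A X \ ed G A (X \ Z) ⊆ s.biUnion t := by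
      intro p hp
      simp only [mem_sdiff, ed, mem_filter, mem_product] at hp
      obtain ⟨⟨⟨hp1, hp2⟩, hp3⟩, hp4⟩ := hp
      have hz : p.1 ∈ Z ∨ p.2 ∈ Z := by
        by_contra hno
        push Not at hno
        exact hp4 ⟨⟨⟨hp1, hno.1⟩, ⟨hp2, hno.2⟩⟩, hp3⟩
      rcases hz with hz | hz
      all_goals
        obtain ⟨i, hi, hiz⟩ := mem_image.1 hz
        refine mem_biUnion.2 ⟨i, hi, mem_filter.2 ⟨?_, ?_⟩⟩
        · simp only [ed, mem_filter, mem_product]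
          exact ⟨⟨hp1, hp2⟩, hp3⟩
        · simp [hiz]
    have h3 := card_le_card hbi
    have hsubE : ed G A (X \ Z) ⊆ ed G A X := by
      intro p hp
      simp only [ed, mem_filter, mem_product, mem_sdiff] at hp ⊢
      tauto
    rw [card_sdiff_of_subset hsubE] at h3
    have hsum : ∑ v ∈ X \ Z, r v + ∑ v ∈ Z, r v = ∑ v ∈ X, r v := sum_sdiff hZX
    by_cases hXZ : (X \ Z).Nonempty
    · have := hmin (X \ Z) (sdiff_ssubset hZX hZn) hXZ
      omega
    · rw [not_nonempty_iff_eq_empty] at hXZ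
      rw [hXZ] at h3 hsum
      simp only [sum_empty, zero_add] at hsum
      have : ed G A ∅ = ∅ := by simp [ed]
      rw [this] at h3
      simp at h3
      omega
  obtain ⟨f, hf, hft⟩ := (Finset.all_card_le_biUnion_card_iff_exists_injective t).1 hall
  -- `into v u`: the edge between `v` and `u` was assigned to `v`
  let into : V → V → Prop := fun v u => ∃ (h : v ∈ X) (i : Fin (r v)),
    f ⟨⟨v, h⟩, i⟩ = if v ∈ A then (v, u) else (u, v)
  have h_asg : ∀ u v, G.Adj u v → into u v → into v u → ¬ (u ∈ A ↔ v ∉ A) := by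
    rintro u v huv ⟨h, i, hi⟩ ⟨h', i', hi'⟩ hiff
    have : f ⟨⟨u, h⟩, i⟩ = f ⟨⟨v, h'⟩, i'⟩ := by
      rw [hi, hi']
      by_cases hu : u ∈ A
      · rw [if_pos hu, if_neg (hiff.1 hu)]
      · rw [if_neg hu, if_pos (by tauto)]
    have := hf this
    have : u = v := by
      have := congrArg (fun z => z.1.1) this
      exact this
    exact huv.ne this
  obtain ⟨O, hO⟩ : ∃ O : V → V → Prop, ∀ u v, O u v ↔
      G.Adj u v ∧ ((u ∉ A ∧ v ∉ A) ∨ ((u ∈ A ↔ v ∉ A) ∧ ¬ into u v)) := ⟨_, fun _ _ => Iff.rfl⟩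
  refine ⟨O, ?_, ?_, ?_⟩
  · intro u v huv
    rw [hO, hO]
    by_cases hu : u ∈ A
    · have hv : v ∉ A := fun hv => hA u hu v hv huv
      by_cases hi : into u v
      · right
        refine ⟨huv.symm, Or.inr ⟨by tauto, fun h => h_asg u v huv hi h (by tauto)⟩⟩
      · left
        exact ⟨huv, Or.inr ⟨by tauto, hi⟩⟩
    · by_cases hv : v ∈ A
      · by_cases hi : into u v
        · right
          refine ⟨huv.symm, Or.inr ⟨by tauto, fun h => h_asg u v huv hi h (by tauto)⟩⟩
        · left
          exact ⟨huv, Or.inr ⟨by tauto, hi⟩⟩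
      · left
        exact ⟨huv, Or.inl ⟨hu, hv⟩⟩
  · intro u v huv hu hv
    exact (hO u v).2 ⟨huv, Or.inl ⟨hu, hv⟩⟩
  · intro v hv
    -- the other end of an assigned edge
    let g : Fin (r v) → V := fun i => if v ∈ A then (f ⟨⟨v, hv⟩, i⟩).2 else (f ⟨⟨v, hv⟩, i⟩).1
    have hfe : ∀ i, f ⟨⟨v, hv⟩, i⟩ = (if v ∈ A then (v, g i) else (g i, v)) ∧ g i ∈ X ∧
        (v ∈ A ↔ g i ∉ A) ∧ G.Adj v (g i) := by
      intro i
      have := hft ⟨⟨v, hv⟩, i⟩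
      simp only [t, ed, mem_filter, mem_product] at this
      obtain ⟨⟨⟨p1, p2⟩, p3, p4, p5⟩, p6⟩ := this
      by_cases hvA : v ∈ A
      · have h1 : (f ⟨⟨v, hv⟩, i⟩).1 = v := by
          rcases p6 with h | h
          · exact h
          · rw [h] at p4; exact absurd hvA p4
        simp only [g, if_pos hvA]
        refine ⟨Prod.ext h1 rfl, p2, by tauto, ?_⟩
        rw [h1] at p5
        exact p5
      · have h1 : (f ⟨⟨v, hv⟩, i⟩).2 = v := by
          rcases p6 with h | h
          · rw [h] at p3; exact absurd p3 hvA
          · exact h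
        simp only [g, if_neg hvA]
        refine ⟨Prod.ext rfl h1, p1, by tauto, ?_⟩
        rw [h1] at p5
        exact p5.symm
    have hg : Function.Injective g := by
      intro i j hij
      have : f ⟨⟨v, hv⟩, i⟩ = f ⟨⟨v, hv⟩, j⟩ := by rw [(hfe i).1, (hfe j).1, hij]
      have := hf this
      simpa using this
    have hcard : (univ.image g).card = r v := by
      rw [card_image_of_injective _ hg]; simp
    rw [← hcard, ← card_union_of_disjoint]
    · apply card_le_card
      intro u hu
      rcases mem_union.1 hu with h | h
      · have := mem_filter.1 h
        exact mem_filter.2 ⟨this.1, ((hO _ _).1 this.2).1⟩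
      · obtain ⟨i, _, rfl⟩ := mem_image.1 h
        exact mem_filter.2 ⟨(hfe i).2.1, (hfe i).2.2.2⟩
    · rw [Finset.disjoint_left]
      intro u hu hu'
      obtain ⟨i, _, rfl⟩ := mem_image.1 hu'
      have h := ((hO _ _).1 (mem_filter.1 hu).2).2
      rcases h with h | h
      · have := (hfe i).2.2.1
        tauto
      · exact h.2 ⟨hv, i, (hfe i).1⟩

end kernels

section critical

variable {V : Type*} [Fintype V] (G : SimpleGraph V)

/-- Criticality with respect to a fixed list assignment. -/
def Crit (k : ℕ) (L : V → Finset ℕ) : Prop :=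
  (∀ v, (L v).card = k - 1) ∧ ¬ LC G univ L ∧ ∀ X : Finset V, X ≠ univ → LC G X L

lemma crit_of {k : ℕ} (h : ListCritical k G) : ∃ L, Crit G k L := by
  obtain ⟨h1, h2⟩ := h
  unfold Choosable at h1
  push Not at h1
  obtain ⟨L, hL, hbad⟩ := h1
  refine ⟨L, hL, ?_, ?_⟩
  · rintro ⟨c, hc1, hc2⟩
    obtain ⟨u, v, huv, he⟩ := hbad c (fun v => hc1 v (mem_univ v))
    exact hc2 u (mem_univ u) v (mem_univ v) huv he
  · intro X hX
    have hne : (⊤ : G.Subgraph).induce (X : Set V) ≠ ⊤ := by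
      intro he
      have := congrArg Subgraph.verts he
      simp only [Subgraph.induce_verts, Subgraph.verts_top] at this
      exact hX (by exact_mod_cast this)
    obtain ⟨c, hc1, hc2⟩ := h2 _ hne (fun v => L v.1) (fun v => hL v.1)
    refine ⟨fun v => if h : v ∈ X then c ⟨v, by simpa using h⟩ else 0, ?_, ?_⟩
    · intro v hv
      dsimp only
      rw [dif_pos hv]
      exact hc1 _
    · intro u hu v hv huv
      dsimp only
      rw [dif_pos hu, dif_pos hv]
      apply hc2
      simp only [Subgraph.coe_adj, Subgraph.induce_adj, Subgraph.top_adj]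
      exact ⟨hu, hv, huv⟩

variable {G} {k : ℕ} {L : V → Finset ℕ}

lemma Crit.ext (hc : Crit G k L) {X : Finset V} (hX : X.Nonempty) :
    ∃ L' : V → Finset ℕ, (∀ v, (k - 1) + dg G X v ≤ (L' v).card + dg G univ v) ∧
      ¬ LC G X L' := by
  obtain ⟨h1, h2, h3⟩ := hc
  have hXc : univ \ X ≠ (univ : Finset V) := by
    obtain ⟨x, hx⟩ := hX
    intro he
    have : x ∈ univ \ X := by rw [he]; exact mem_univ x
    simp [hx] at this
  obtain ⟨c, hc1, hc2⟩ := h3 _ hXc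
  refine ⟨fun v => L v \ ((univ \ X).filter (fun u => G.Adj v u)).image c, ?_, ?_⟩
  · intro v
    have e1 := dg_split G (subset_univ X) v
    have e2 : (((univ \ X).filter (fun u => G.Adj v u)).image c).card ≤ dg G (univ \ X) v :=
      card_image_le
    have e3 := le_card_sdiff (((univ \ X).filter (fun u => G.Adj v u)).image c) (L v)
    have e4 := h1 v
    dsimp only
    omega
  · rintro ⟨c', hc1', hc2'⟩
    apply h2
    have hx : ∀ u ∈ X, ∀ v ∉ X, G.Adj u v → c' u ≠ c v := by
      intro u hu v hv huv he
      have := (mem_sdiff.1 (hc1' u hu)).2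
      exact this (mem_image.2 ⟨v, by simp [hv, huv], he.symm⟩)
    refine ⟨fun v => if v ∈ X then c' v else c v, ?_, ?_⟩
    · intro v _
      dsimp only
      split_ifs with h
      · exact (mem_sdiff.1 (hc1' v h)).1
      · exact hc1 v (by simp [h])
    · intro u _ v _ huv
      dsimp only
      split_ifs with h h' h'
      · exact hc2' u h v h' huv
      · exact hx u h v h' huv
      · exact (hx v h' u h huv.symm).symm
      · exact hc2 u (by simp [h]) v (by simp [h']) huv

lemma Crit.mindeg (hc : Crit G k L) (v : V) : k - 1 ≤ dg G univ v := by
  by_contra hlt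
  obtain ⟨L', h1, h2⟩ := hc.ext (X := {v}) ⟨v, by simp⟩
  apply h2
  apply greedy
  intro P hP ⟨a, ha⟩
  have hav : a = v := by simpa using hP ha
  subst hav
  refine ⟨a, ha, ?_⟩
  have e1 := dg_mono G hP a
  have e2 := h1 a
  have e3 : dg G {a} a = 0 := by rw [dg_singleton]; simp
  omega

lemma Crit.km (hk : 4 ≤ k) (hc : Crit G k L) (A : Finset V) (hA : Ind G A) :
    ∑ v ∈ A, dg G univ v + (k - 2) * Fintype.card V + 1 ≤ sg G univ := by
  have hmd := hc.mindeg
  have claim : ∀ X : Finset V, X.Nonempty →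
      (ed G A X).card < ∑ v ∈ X, (dg G univ v - (k - 2)) := by
    intro X
    induction X using Finset.strongInduction with
    | H X ih =>
      intro hXn
      by_contra hcon
      push Not at hcon
      obtain ⟨O, hO1, hO2, hO3⟩ := orient G A X hA _ hcon ih
      obtain ⟨L', h1, h2⟩ := hc.ext hXn
      apply h2
      refine kernel_color G O A hA hO1 hO2 X L' ?_
      intro v hv
      have e1 := hO3 v hv
      have e2 := h1 v
      have e3 := hmd v
      omega
  have hne : (univ : Finset V).Nonempty := by
    by_contra hem
    rw [not_nonempty_iff_eq_empty] at hem
    apply hc.2.1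
    rw [hem]
    exact ⟨fun _ => 0, by simp, by simp⟩
  have h1 := claim univ hne
  have h2 : ∑ v ∈ A, dg G univ v ≤ (ed G A univ).card := by
    have hmap : Set.MapsTo (Prod.fst : V × V → V) (ed G A univ) A := by
      intro p hp
      have hp' : p ∈ ed G A univ := hp
      simp only [ed, mem_filter] at hp'
      exact hp'.2.1
    rw [card_eq_sum_card_fiberwise hmap]
    refine sum_le_sum fun v hv => ?_
    unfold dg
    rw [← card_image_of_injective _ (Prod.mk_right_injective v)]
    apply card_le_card
    intro p hp
    obtain ⟨u, hu, rfl⟩ := mem_image.1 hp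
    have hvu := (mem_filter.1 hu).2
    simp only [ed, mem_filter, mem_product, mem_univ, true_and, and_true]
    exact ⟨hv, fun huA => hA v hv u huA hvu, hvu⟩
  have h3 : ∑ v : V, (dg G univ v - (k - 2)) + (k - 2) * Fintype.card V = sg G univ := by
    have : (k - 2) * Fintype.card V = ∑ _v : V, (k - 2) := by simp [mul_comm]
    rw [this, ← sum_add_distrib]
    refine sum_congr rfl fun v _ => ?_
    have := hmd v
    omega
  omega

lemma Crit.conn (hc : Crit G k L) : Conn G univ := by
  intro P _ hPn hPc
  by_contra hno
  push Not at hno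
  obtain ⟨x, hx⟩ := hPn
  obtain ⟨y, hy⟩ := hPc
  obtain ⟨c, hc1, hc2⟩ := hc.2.2 P (fun h => by simp [h] at hy)
  obtain ⟨c', hc1', hc2'⟩ := hc.2.2 (univ \ P) (fun h => by
    have : x ∈ univ \ P := by rw [h]; exact mem_univ x
    simp [hx] at this)
  apply hc.2.1
  refine ⟨fun v => if v ∈ P then c v else c' v, ?_, ?_⟩
  · intro v _
    dsimp only
    split_ifs with h
    · exact hc1 v h
    · exact hc1' v (by simp [h])
  · intro u _ v _ huv
    dsimp only
    split_ifs with h h' h'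
    · exact hc2 u h v h' huv
    · exact absurd huv (hno u h v (by simp [h']))
    · exact absurd huv.symm (hno v h' u (by simp [h]))
    · exact hc2' u (by simp [h]) v (by simp [h']) huv

lemma Crit.reg (hc : Crit G k L) {B : Finset V} (hB : B.Nonempty) (hcn : Conn G B) (hN : NC G B)
    (hd : ∀ v ∈ B, dg G univ v = k - 1) : ∀ u ∈ B, ∀ v ∈ B, dg G B u = dg G B v := by
  obtain ⟨L', h1, h2⟩ := hc.ext hB
  refine regular G L' hcn hN ?_ h2
  intro v hv
  have e1 := h1 v
  have e2 := hd v hv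
  omega

lemma Crit.closed (hc : Crit G k L) {B : Finset V} (hB : B.Nonempty)
    (hd : ∀ v ∈ B, dg G B v = dg G univ v) : B = univ := by
  by_contra hne
  have hcn : (univ \ B).Nonempty := by
    rw [nonempty_iff_ne_empty]
    intro h
    exact hne (subset_antisymm (subset_univ _) (sdiff_eq_empty_iff_subset.1 h))
  obtain ⟨a, ha, b, hb, hab⟩ := hc.conn B (subset_univ _) hB hcn
  have e1 := dg_split G (subset_univ B) a
  have e2 := dg_pos G hb hab
  have e3 := hd a ha
  omega

lemma Crit.endfact (hk : 4 ≤ k) (hc : Crit G k L) (hd : ∀ v, dg G univ v = k - 1) {v : V}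
    (hX : Conn G (univ \ {v})) {x0 : V} {D : Finset V} (hD : D.Nonempty)
    (hDX : D ⊆ univ \ {v}) (hx0 : x0 ∈ (univ \ {v}) \ D)
    (hcl : ∀ a ∈ D, ∀ b ∈ univ \ {v}, G.Adj a b → b ∈ D ∨ b = x0) :
    ∃ C ⊆ D, (∀ c ∈ C, G.Adj v c) ∧ k - 2 ≤ C.card := by
  obtain ⟨x, C, hCn, hCD, hx, hC, hcon, hnc⟩ := endblock G hX hD hDX hx0 hcl
  have hxC : x ∉ C := (mem_sdiff.1 hx).2
  have hreg := hc.reg (insert_nonempty x C) hcon hnc (fun v _ => hd v)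
  have hvB : v ∉ insert x C := by
    intro h
    rcases mem_insert.1 h with rfl | h
    · simp at hx
    · simpa using hDX (hCD h)
  have hsplit : ∀ c ∈ C, k - 1 = dg G (insert x C) c + if G.Adj c v then 1 else 0 := by
    intro c hcC
    rw [← hd c, dg_split G (subset_univ (insert x C)) c, ← dg_singleton]
    congr 1
    unfold dg
    congr 1
    ext u
    simp only [mem_filter, mem_sdiff, mem_univ, true_and, mem_singleton]
    constructor
    · rintro ⟨h1, h2⟩
      refine ⟨?_, h2⟩
      by_contra huv
      rcases hC c hcC u (by simp [huv]) h2 with h | h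
      · exact h1 (mem_insert_of_mem h)
      · exact h1 (h ▸ mem_insert_self _ _)
    · rintro ⟨rfl, h2⟩
      exact ⟨hvB, h2⟩
  have hadj : ∀ c ∈ C, G.Adj c v := by
    intro c hcC
    by_contra hno
    have h1 := hsplit c hcC
    rw [if_neg hno] at h1
    have := hc.closed (insert_nonempty x C) (by
      intro z hz
      rw [hd z, hreg z hz c (mem_insert_of_mem hcC)]
      omega)
    exact hvB (this ▸ mem_univ v)
  refine ⟨C, hCD, fun c h => (hadj c h).symm, ?_⟩
  obtain ⟨c, hcC⟩ := hCn
  have h1 := hsplit c hcC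
  rw [if_pos (hadj c hcC)] at h1
  have h2 := dg_lt_card G (show c ∈ insert x C from mem_insert_of_mem hcC)
  rw [card_insert_of_notMem hxC] at h2
  omega

lemma Crit.brooks (hk : 4 ≤ k) (hc : Crit G k L)
    (hne : IsEmpty (G ≃g (⊤ : SimpleGraph (Fin k)))) {B : Finset V} (hB : B.Nonempty)
    (hN : NC G B) (hd0 : ∀ v ∈ B, dg G univ v = k - 1)
    (hd1 : ∀ v ∈ B, dg G B v = k - 1) : False := by
  have hBu : B = univ := hc.closed hB (fun v hv => by rw [hd0 v hv, hd1 v hv])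
  subst hBu
  have hd : ∀ v, dg G univ v = k - 1 := fun v => hd0 v (mem_univ v)
  obtain ⟨v, hv⟩ := hB
  have hS := hN v hv
  have hNv : ∀ w, dg G univ w = (if G.Adj w v then 1 else 0) + dg G (univ \ {v}) w := by
    intro w
    rw [dg_split G (subset_univ {v}) w, dg_singleton]
  by_cases hNS : NC G (univ \ {v})
  · obtain ⟨u, hu⟩ : (univ.filter (fun u => G.Adj v u)).Nonempty := by
      rw [← card_pos]
      have := hd v
      unfold dg at this
      omega
    have huv := (mem_filter.1 hu).2
    have huS : u ∈ univ \ {v} := by simp [huv.ne']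
    have hreg := hc.reg ⟨u, huS⟩ hS hNS (fun w _ => hd w)
    have hall : ∀ w, w ≠ v → G.Adj w v := by
      intro w hw
      by_contra hno
      have e1 := hNv w
      have e2 := hNv u
      rw [if_neg hno, hd] at e1
      rw [if_pos huv.symm, hd] at e2
      have e3 := hreg w (by simp [hw]) u huS
      omega
    have hcardV : Fintype.card V = k := by
      have : univ.filter (fun u => G.Adj v u) = univ.erase v := by
        ext w
        simp only [mem_filter, mem_univ, true_and, mem_erase, and_true]
        exact ⟨fun h => h.ne', fun h => (hall w h).symm⟩
      have h2 := hd v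
      unfold dg at h2
      rw [this, card_erase_of_mem (mem_univ v), card_univ] at h2
      have : 0 < Fintype.card V := Fintype.card_pos_iff.2 ⟨v⟩
      omega
    have htop : ∀ a b, a ≠ b → G.Adj a b := by
      intro a b hab
      have hsub : univ.filter (fun u => G.Adj a u) ⊆ univ.erase a := by
        intro w hw
        simp only [mem_filter, mem_univ, true_and] at hw
        simp [hw.ne']
      have heq := eq_of_subset_of_card_le hsub (by
        have h2 := hd a
        unfold dg at h2
        rw [card_erase_of_mem (mem_univ a), card_univ]
        omega)
      have : b ∈ univ.erase a := by simp [hab.symm]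
      rw [← heq] at this
      exact (mem_filter.1 this).2
    refine hne.elim ⟨Fintype.equivFinOfCardEq hcardV, ?_⟩
    intro a b
    simp only [top_adj, ne_eq, EmbeddingLike.apply_eq_iff_eq]
    exact ⟨htop a b, fun h => h.ne⟩
  · unfold NC at hNS
    push Not at hNS
    obtain ⟨x, hx, hncx⟩ := hNS
    unfold Conn at hncx
    push Not at hncx
    obtain ⟨P, hP, hPn, hPc, hno⟩ := hncx
    have hxP : x ∉ P := fun h => by simpa using hP h
    obtain ⟨C1, hC1, ha1, hk1⟩ := hc.endfact hk hd hS hPn (hP.trans sdiff_subset) (x0 := x)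
      (by rw [mem_sdiff]; exact ⟨hx, hxP⟩) (by
        intro a ha b hb hab
        by_contra hcon
        push Not at hcon
        refine hno a ha b ?_ hab
        simp only [mem_sdiff, mem_singleton] at hb ⊢
        tauto)
    obtain ⟨C2, hC2, ha2, hk2⟩ := hc.endfact hk hd hS hPc
      (sdiff_subset.trans sdiff_subset) (x0 := x)
      (by rw [mem_sdiff]; exact ⟨hx, by simp⟩) (by
        intro a ha b hb hab
        by_contra hcon
        push Not at hcon
        refine hno b ?_ a ha hab.symm
        simp only [mem_sdiff, mem_singleton] at hb hcon
        tauto)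
    have hdis : Disjoint C1 C2 := by
      rw [Finset.disjoint_left]
      intro z h1 h2
      exact (mem_sdiff.1 (hC2 h2)).2 (hC1 h1)
    have : (C1 ∪ C2).card ≤ dg G univ v := by
      apply card_le_card
      intro z hz
      rcases mem_union.1 hz with h | h
      · simp [ha1 z h]
      · simp [ha2 z h]
    rw [card_union_of_disjoint hdis, hd] at this
    omega

end critical

section counting

variable {V : Type*}

lemma indHigh (G : SimpleGraph V) {k : ℕ} (hk : 4 ≤ k) (Y : Finset V) :
    ∃ I ⊆ Y, Ind G I ∧ (2 * k - 1) * Y.card ≤ 2 * k * I.card + (k - 1) * sg G Y := by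
  obtain ⟨m, rfl⟩ : ∃ m, k = m + 4 := ⟨k - 4, by omega⟩
  have e1 : 2 * (m + 4) - 1 = 2 * m + 7 := by omega
  have e2 : m + 4 - 1 = m + 3 := by omega
  rw [e1, e2]
  induction Y using Finset.strongInduction with
  | H Y ih =>
    rcases Y.eq_empty_or_nonempty with rfl | ⟨v0, hv0⟩
    · exact ⟨∅, subset_rfl, by simp [Ind], by simp⟩
    by_cases hbig : ∃ v ∈ Y, 2 ≤ dg G Y v
    · obtain ⟨v, hv, h2⟩ := hbig
      have hsub : {v} ⊆ Y := singleton_subset_iff.2 hv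
      obtain ⟨I, hI, hInd, hcard⟩ := ih (Y \ {v}) (sdiff_ssubset hsub (by simp))
      refine ⟨I, hI.trans sdiff_subset, hInd, ?_⟩
      have h3 := sg_split G hsub
      have h4 := dg_split G hsub v
      rw [dg_singleton, if_neg (G.loopless.irrefl v)] at h4
      rw [sum_singleton] at h3
      have h5 := card_sdiff_add_card_eq_card hsub
      rw [card_singleton] at h5
      have h6 : sg G (Y \ {v}) + 4 ≤ sg G Y := by omega
      have h7 := Nat.mul_le_mul_left (m + 3) h6
      rw [← h5]
      nlinarith
    · push Not at hbig
      set R := insert v0 (Y.filter (fun u => G.Adj v0 u)) with hR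
      have hsub : R ⊆ Y := insert_subset hv0 (filter_subset _ _)
      have hRc : R.card = dg G Y v0 + 1 := card_insert_of_notMem (by simp)
      obtain ⟨I, hI, hInd, hcard⟩ := ih (Y \ R) (sdiff_ssubset hsub (insert_nonempty _ _))
      have hnadj : ∀ u ∈ I, ¬ G.Adj v0 u := by
        intro u hu h
        have := mem_sdiff.1 (hI hu)
        exact this.2 (by simp [hR, this.1, h])
      have hv0I : v0 ∉ I := fun h => (mem_sdiff.1 (hI h)).2 (by simp [hR])
      refine ⟨insert v0 I, insert_subset hv0 (hI.trans sdiff_subset), ?_, ?_⟩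
      · intro a ha b hb hab
        rcases mem_insert.1 ha with ha | ha
        · rcases mem_insert.1 hb with hb | hb
          · exact hab.ne (ha.trans hb.symm)
          · exact hnadj b hb (ha ▸ hab)
        · rcases mem_insert.1 hb with hb | hb
          · exact hnadj a ha (hb ▸ hab.symm)
          · exact hInd a ha b hb hab
      · rw [card_insert_of_notMem hv0I]
        have h3 := sg_split G hsub
        have h5 := card_sdiff_add_card_eq_card hsub
        have hlt := hbig v0 hv0
        have h6 : sg G (Y \ R) + 2 * dg G Y v0 ≤ sg G Y := by
          have : 2 * dg G Y v0 ≤ sg G R := by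
            have hR2 : sg G R = _ := sg_split G (show {v0} ⊆ R by simp [hR])
            rw [sum_singleton] at hR2
            have h8 : dg G (R \ {v0}) v0 = dg G Y v0 := by
              unfold dg
              congr 1
              ext u
              simp only [hR, mem_filter, mem_sdiff, mem_insert, mem_singleton]
              constructor
              · rintro ⟨⟨h | h, h'⟩, h''⟩
                · exact absurd h h'
                · exact h
              · rintro ⟨h, h'⟩
                exact ⟨⟨Or.inr ⟨h, h'⟩, h'.ne'⟩, h'⟩
            omega
          omega
        have h7 := Nat.mul_le_mul_left (m + 3) h6
        rw [← h5, hRc]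
        generalize dg G Y v0 = t at *
        interval_cases t <;> nlinarith

variable [Fintype V] {G : SimpleGraph V} {k : ℕ} {L : V → Finset ℕ}

lemma Crit.indLow (hk : 4 ≤ k) (hc : Crit G k L)
    (hne : IsEmpty (G ≃g (⊤ : SimpleGraph (Fin k)))) (X : Finset V)
    (hd : ∀ v ∈ X, dg G univ v = k - 1) :
    ∃ J ⊆ X, Ind G J ∧ (∀ v ∈ J, dg G X v = k - 1) ∧
      sg G X ≤ 2 * J.card + (k - 2) * X.card := by
  induction X using Finset.strongInduction with
  | H X ih =>
    rcases X.eq_empty_or_nonempty with rfl | ⟨v0, hv0⟩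
    · exact ⟨∅, subset_rfl, by simp [Ind], by simp, by simp [sg]⟩
    -- full vertices of a subset stay full
    have hfull : ∀ Z ⊆ X, ∀ v ∈ Z, dg G Z v = k - 1 → dg G X v = k - 1 ∧
        ∀ u ∈ X \ Z, ¬ G.Adj v u := by
      intro Z hZ v hv h
      have h1 := dg_split G hZ v
      have h2 := dg_mono G (subset_univ X) v
      have h3 := hd v (hZ hv)
      refine ⟨by omega, fun u hu huv => ?_⟩
      have := dg_pos G hu huv
      omega
    by_cases hcon : Conn G X
    · by_cases hone : X = {v0}
      · refine ⟨∅, by simp, by simp [Ind], by simp, ?_⟩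
        have : sg G X = 0 := by
          rw [hone, sg, sum_singleton, dg_singleton]; simp
        omega
      have hDn : (X \ {v0}).Nonempty := by
        rw [nonempty_iff_ne_empty]
        intro h
        exact hone (subset_antisymm (sdiff_eq_empty_iff_subset.1 h) (by simpa using hv0))
      obtain ⟨x, C, hCn, hCD, hx, hC, hBc, hBn⟩ := endblock G hcon hDn sdiff_subset (x0 := v0)
        (by simp [hv0]) (by
          intro a ha b hb hab
          by_cases h : b = v0
          · exact Or.inr h
          · exact Or.inl (by simp [hb, h]))
      have hxX : x ∈ X := (mem_sdiff.1 hx).1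
      have hxC : x ∉ C := (mem_sdiff.1 hx).2
      have hCX : C ⊆ X := hCD.trans sdiff_subset
      set B := insert x C with hB
      have hBX : B ⊆ X := insert_subset hxX hCX
      have hxB : x ∈ B := mem_insert_self _ _
      have hBne : B.Nonempty := insert_nonempty _ _
      have hBC : B.card = C.card + 1 := card_insert_of_notMem hxC
      have hreg := hc.reg hBne hBc hBn (fun v hv => hd v (hBX hv))
      obtain ⟨d, hdd⟩ : ∃ d, d = dg G B x := ⟨_, rfl⟩
      have hdB : ∀ v ∈ B, dg G B v = d := fun v hv => by rw [hdd]; exact hreg v hv x hxB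
      have hsgB : sg G B = d * B.card := by
        rw [sg, sum_congr rfl hdB]; simp [mul_comm]
      have hdk : d ≤ k - 1 := by
        rw [hdd, ← hd x hxX]; exact dg_mono G (subset_univ _) x
      have hdC : d ≤ C.card := by
        have := dg_lt_card G hxB
        omega
      have hCout : ∀ a ∈ C, dg G (X \ B) a = 0 := by
        intro a ha
        apply dg_zero
        intro u hu hau
        rw [mem_sdiff] at hu
        rcases hC a ha u hu.1 hau with h | h
        · exact hu.2 (mem_insert_of_mem h)
        · exact hu.2 (h ▸ hxB)
      rcases Nat.lt_or_ge d (k - 2) with hlt | hge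
      · -- remove `C`
        obtain ⟨J, hJ, hJI, hJf, hJc⟩ := ih (X \ C) (sdiff_ssubset hCX hCn)
          (fun v hv => hd v (mem_sdiff.1 hv).1)
        refine ⟨J, hJ.trans sdiff_subset, hJI,
          fun v hv => (hfull _ sdiff_subset v (hJ hv) (hJf v hv)).1, ?_⟩
        have h1 := sg_split G hCX
        have h2 : sg G B = _ := sg_split G (show C ⊆ B from subset_insert _ _)
        have h3 : ∑ v ∈ C, dg G (X \ C) v = ∑ v ∈ C, dg G (B \ C) v := by
          refine sum_congr rfl fun v hv => ?_
          have e1 := dg_split G (show B \ C ⊆ X \ C from sdiff_subset_sdiff hBX subset_rfl) v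
          have e2 : (X \ C) \ (B \ C) = X \ B := by
            ext u
            simp only [mem_sdiff, hB, mem_insert]
            tauto
          rw [e2, hCout v hv] at e1
          omega
        have h4 := card_sdiff_add_card_eq_card hCX
        have h5 : sg G C + 2 * ∑ v ∈ C, dg G (B \ C) v ≤ (k - 2) * C.card := by
          have h6 : d * B.card ≤ (k - 2) * C.card := by
            rw [hBC]
            calc d * (C.card + 1) = d * C.card + d := by ring
              _ ≤ d * C.card + C.card := by omega
              _ = (d + 1) * C.card := by ring
              _ ≤ (k - 2) * C.card := Nat.mul_le_mul_right _ hlt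
          omega
        rw [← h4, mul_add, h1, h3]
        omega
      rcases Nat.eq_or_lt_of_le hge with heq | hgt
      · -- remove `B`
        obtain ⟨J, hJ, hJI, hJf, hJc⟩ := ih (X \ B) (sdiff_ssubset hBX hBne)
          (fun v hv => hd v (mem_sdiff.1 hv).1)
        have h1 := sg_split G hBX
        have h2 : ∑ v ∈ B, dg G (X \ B) v = dg G (X \ B) x := by
          rw [hB, sum_insert hxC, ← hB, sum_eq_zero hCout, add_zero]
        have h3 := dg_split G hBX x
        have h4 := dg_mono G (subset_univ X) x
        rw [hd x hxX] at h4
        have h5 := card_sdiff_add_card_eq_card hBX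
        rw [hsgB, ← heq] at h1
        have hJx : x ∉ J := fun h => (mem_sdiff.1 (hJ h)).2 hxB
        by_cases ht : dg G (X \ B) x = 0
        · refine ⟨J, hJ.trans sdiff_subset, hJI,
            fun v hv => (hfull _ sdiff_subset v (hJ hv) (hJf v hv)).1, ?_⟩
          rw [← h5, mul_add, h1, h2]
          omega
        · have hJnx : ∀ v ∈ J, ¬ G.Adj v x := fun v hv =>
            (hfull _ sdiff_subset v (hJ hv) (hJf v hv)).2 x (by simp [hxX, hxB])
          refine ⟨insert x J, insert_subset hxX (hJ.trans sdiff_subset), ?_, ?_, ?_⟩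
          · intro a ha b hb hab
            rcases mem_insert.1 ha with ha | ha
            · rcases mem_insert.1 hb with hb | hb
              · exact hab.ne (ha.trans hb.symm)
              · exact hJnx b hb (ha ▸ hab.symm)
            · rcases mem_insert.1 hb with hb | hb
              · exact hJnx a ha (hb ▸ hab)
              · exact hJI a ha b hb hab
          · intro v hv
            rcases mem_insert.1 hv with rfl | hv
            · omega
            · exact (hfull _ sdiff_subset v (hJ hv) (hJf v hv)).1
          · rw [card_insert_of_notMem hJx, ← h5, mul_add (k - 2), h1, h2]
            omega
      · exact (hc.brooks hk hne hBne hBn (fun v hv => hd v (hBX hv))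
          (fun v hv => by rw [hdB v hv]; omega)).elim
    · unfold Conn at hcon
      push Not at hcon
      obtain ⟨P, hP, hPn, hPc, hno⟩ := hcon
      obtain ⟨J1, hJ1, hI1, hf1, hc1⟩ := ih P
        (hP.ssubset_of_ne (fun h => by simp [h] at hPc)) (fun v hv => hd v (hP hv))
      obtain ⟨J2, hJ2, hI2, hf2, hc2⟩ := ih (X \ P) (sdiff_ssubset hP hPn)
        (fun v hv => hd v (mem_sdiff.1 hv).1)
      refine ⟨J1 ∪ J2, union_subset (hJ1.trans hP) (hJ2.trans sdiff_subset), ?_, ?_, ?_⟩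
      · intro a ha b hb hab
        rcases mem_union.1 ha with ha | ha
        · rcases mem_union.1 hb with hb | hb
          · exact hI1 a ha b hb hab
          · exact hno a (hJ1 ha) b (hJ2 hb) hab
        · rcases mem_union.1 hb with hb | hb
          · exact hno b (hJ1 hb) a (hJ2 ha) hab.symm
          · exact hI2 a ha b hb hab
      · intro v hv
        rcases mem_union.1 hv with hv | hv
        · exact (hfull P hP v (hJ1 hv) (hf1 v hv)).1
        · exact (hfull _ sdiff_subset v (hJ2 hv) (hf2 v hv)).1
      · have hdis : Disjoint J1 J2 := disjoint_sdiff.mono hJ1 hJ2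
        have h1 := sg_split G hP
        have h2 : ∑ v ∈ P, dg G (X \ P) v = 0 :=
          sum_eq_zero fun v hv => dg_zero G (fun u hu => hno v hv u hu)
        have h3 := card_sdiff_add_card_eq_card hP
        rw [card_union_of_disjoint hdis, ← h3, mul_add (k - 2), h1, h2]
        omega

lemma Crit.main (hk : 4 ≤ k) (hc : Crit G k L)
    (hne : IsEmpty (G ≃g (⊤ : SimpleGraph (Fin k)))) :
    ((k : ℤ) - 3) * Fintype.card V + 2 ≤
      (((k : ℤ) - 1) ^ 2 + 1) * ((sg G univ : ℤ) - (k - 1) * Fintype.card V) := by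
  set X : Finset V := univ.filter (fun v => dg G univ v = k - 1) with hX
  set H : Finset V := univ \ X with hH
  have hdX : ∀ v ∈ X, dg G univ v = k - 1 := fun v hv => (mem_filter.1 hv).2
  have hdH : ∀ v ∈ H, k ≤ dg G univ v := by
    intro v hv
    have h1 := hc.mindeg v
    have h2 : dg G univ v ≠ k - 1 := by simpa [hH, hX] using hv
    omega
  obtain ⟨I, hI, hII, hIc⟩ := indHigh G hk H
  obtain ⟨J, hJ, hJI, hJf, hJc⟩ := hc.indLow hk hne X hdX
  have hJH : ∀ v ∈ J, ∀ u ∈ H, ¬ G.Adj v u := by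
    intro v hv u hu huv
    have h1 := dg_split G (subset_univ X) v
    rw [← hH] at h1
    have h2 := dg_pos G hu huv
    have h3 := hdX v (hJ hv)
    have h4 := hJf v hv
    omega
  have hdis : Disjoint I J := (disjoint_sdiff (s := X)).symm.mono hI hJ
  have hkm := hc.km hk (I ∪ J) (by
    intro a ha b hb hab
    rcases mem_union.1 ha with ha | ha
    · rcases mem_union.1 hb with hb | hb
      · exact hII a ha b hb hab
      · exact hJH b hb a (hI ha) hab.symm
    · rcases mem_union.1 hb with hb | hb
      · exact hJH a ha b (hI hb) hab
      · exact hJI a ha b hb hab)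
  rw [sum_union hdis] at hkm
  have hsI : k * I.card ≤ ∑ v ∈ I, dg G univ v := by
    rw [mul_comm, ← smul_eq_mul]
    exact card_nsmul_le_sum _ _ _ (fun v hv => hdH v (hI hv))
  have hsJ : ∑ v ∈ J, dg G univ v = (k - 1) * J.card := by
    rw [sum_congr rfl (fun v hv => hdX v (hJ hv))]; simp [mul_comm]
  have hn : Fintype.card V = X.card + H.card := by
    have := card_sdiff_add_card_eq_card (subset_univ X)
    rw [card_univ, ← hH] at this
    omega
  have hsplit := sg_split G (subset_univ X)
  rw [← hH] at hsplit
  have hXs : sg G X + ∑ v ∈ X, dg G H v = (k - 1) * X.card := by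
    have : ∑ v ∈ X, dg G univ v = (k - 1) * X.card := by
      rw [sum_congr rfl hdX]; simp [mul_comm]
    rw [← this, sg, ← sum_add_distrib]
    exact sum_congr rfl fun v _ => (dg_split G (subset_univ X) v).symm
  have hHs : k * H.card ≤ sg G H + ∑ v ∈ X, dg G H v := by
    have h1 : k * H.card ≤ ∑ v ∈ H, dg G univ v := by
      rw [mul_comm, ← smul_eq_mul]
      exact card_nsmul_le_sum _ _ _ hdH
    rw [dg_comm G X H, sg, ← sum_add_distrib]
    refine h1.trans (le_of_eq (sum_congr rfl fun v _ => ?_))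
    rw [dg_split G (subset_univ X) v, add_comm]
  rw [hsJ, hn] at hkm
  rw [hn]
  generalize ∑ v ∈ X, dg G H v = e at *
  generalize ∑ v ∈ I, dg G univ v = sI at *
  generalize sg G univ = D at *
  generalize sg G X = sX at *
  generalize sg G H = sH at *
  generalize X.card = l at *
  generalize H.card = h at *
  generalize I.card = i at *
  generalize J.card = j at *
  clear hne hdX hdH hJH hdis hc hI hJ hJf
  obtain ⟨m, rfl⟩ : ∃ m, k = m + 4 := ⟨k - 4, by omega⟩
  have e1 : 2 * (m + 4) - 1 = 2 * m + 7 := by omega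
  have e2 : m + 4 - 1 = m + 3 := by omega
  have e3 : m + 4 - 2 = m + 2 := by omega
  rw [e1, e2] at hIc
  rw [e3] at hJc hkm
  rw [e2] at hkm hXs
  zify at *
  have hS : (0 : ℤ) ≤ (D - (m + 3) * (l + h)) - h := by nlinarith
  have hm : (0 : ℤ) ≤ (m : ℤ) := by positivity
  have hS2 : 0 ≤ ((m : ℤ) ^ 2 + 5 * m + 5) * ((D - (m + 3) * (l + h)) - h) := by positivity
  have hJ2 := mul_le_mul_of_nonneg_left hJc (show (0 : ℤ) ≤ m + 3 by positivity)
  have hD : (D : ℤ) = (m + 3) * l + sH + e := by linarith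
  have hsX : (sX : ℤ) = (m + 3) * l - e := by linarith
  rw [hsX] at hJ2
  rw [hD] at hkm hS2 ⊢
  linarith

end counting

end LCP

/-- Every incomplete `k`-list-critical graph (`k ≥ 4`) has average degree at least
`k - 1 + (k-3)/(k²-2k+2)`. -/
theorem stmt_1 {V : Type*} [Fintype V] (k : ℕ) (hk : 4 ≤ k) (G : SimpleGraph V)
    (hcrit : ListCritical k G)
    (hne : IsEmpty (G ≃g (⊤ : SimpleGraph (Fin k)))) :
    (2 * edgeCount G : ℚ) ≥
      ((k : ℚ) - 1 + ((k : ℚ) - 3) / ((k : ℚ) ^ 2 - 2 * k + 2)) * (Fintype.card V : ℚ) +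
        2 / ((k : ℚ) ^ 2 - 2 * k + 2) := by
  obtain ⟨L, hc⟩ := LCP.crit_of G hcrit
  have hmain := hc.main hk hne
  have hsg : LCP.sg G Finset.univ = 2 * edgeCount G := by
    classical
    have h1 := G.sum_degrees_eq_twice_card_edges
    have h2 : edgeCount G = G.edgeFinset.card := by
      rw [edgeCount, Nat.card_eq_fintype_card, ← SimpleGraph.edgeFinset_card]
    rw [h2, ← h1, LCP.sg]
    refine Finset.sum_congr rfl fun v _ => ?_
    rw [LCP.dg, ← SimpleGraph.card_neighborFinset_eq_degree]
    congr 1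
    ext u
    simp
  rw [hsg] at hmain
  have hq : ((k : ℚ) - 3) * Fintype.card V + 2 ≤
      (((k : ℚ) - 1) ^ 2 + 1) * (((2 * edgeCount G : ℕ) : ℚ) - (k - 1) * Fintype.card V) := by
    exact_mod_cast hmain
  have hpos : (0 : ℚ) < (k : ℚ) ^ 2 - 2 * k + 2 := by nlinarith [sq_nonneg ((k : ℚ) - 1)]
  have heq : ((k : ℚ) - 1 + ((k : ℚ) - 3) / ((k : ℚ) ^ 2 - 2 * k + 2)) * (Fintype.card V : ℚ) +
        2 / ((k : ℚ) ^ 2 - 2 * k + 2) = ((k : ℚ) - 1) * Fintype.card V +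
        (((k : ℚ) - 3) * Fintype.card V + 2) / ((k : ℚ) ^ 2 - 2 * k + 2) := by
    ring
  rw [ge_iff_le, heq, ← le_sub_iff_add_le', div_le_iff₀ hpos]
  push_cast at hq
  linarith
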